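/- Let |Ψ⟩ = |φ₁⟩ ⊗ ... ⊗ |φ_m⟩ be a k-producible pure state (each |φ_i⟩ on at most k parties) with entanglement depth exactly k, and let D = {|φ_i⟩ : |φ_i⟩ lives on exactly k parties and is genuinely entangled}. Then the k-depth entanglement detection length satisfies l_dep^k(|Ψ⟩) = min_{|φ_i⟩∈D} l_GME(|φ_i⟩), and in particular 2 ≤ l_dep^k(|Ψ⟩) ≤ k. -/

import Mathlib

open scoped Matrix ComplexOrder

noncomputable section

namespace QDL

variable {ι : Type*} [Fintype ι] [DecidableEq ι]

abbrev Config (d : ι → ℕ) := ∀ i, Fin (d i)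

def IsState {d : ι → ℕ} (ρ : Matrix (Config d) (Config d) ℂ) : Prop :=
  ρ.PosSemidef ∧ ρ.trace = 1

def merge {d : ι → ℕ} (S : Finset ι)
    (f : Config (fun i : {i // i ∈ S} => d i))
    (g : Config (fun i : {i // i ∉ S} => d i)) : Config d := fun i =>
  if h : i ∈ S then f ⟨i, h⟩ else g ⟨i, h⟩

/-- Partial trace of `ρ` onto the subsystems in `S`. -/
def marginal {d : ι → ℕ} (S : Finset ι)
    (ρ : Matrix (Config d) (Config d) ℂ) :
    Matrix (Config (fun i : {i // i ∈ S} => d i))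
      (Config (fun i : {i // i ∈ S} => d i)) ℂ :=
  fun f g => ∑ h : Config (fun i : {i // i ∉ S} => d i), ρ (merge S f h) (merge S g h)

def Compatible {d : ι → ℕ} (𝒮 : Finset (Finset ι))
    (ρ σ : Matrix (Config d) (Config d) ℂ) : Prop :=
  ∀ S ∈ 𝒮, marginal S σ = marginal S ρ

def prodMat {d : ι → ℕ} (A : ∀ i, Matrix (Fin (d i)) (Fin (d i)) ℂ) :
    Matrix (Config d) (Config d) ℂ := fun f g => ∏ i, A i (f i) (g i)

def FullySep {d : ι → ℕ} (ρ : Matrix (Config d) (Config d) ℂ) : Prop :=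
  ∃ (k : ℕ) (w : Fin k → ℝ) (A : Fin k → ∀ i, Matrix (Fin (d i)) (Fin (d i)) ℂ),
    (∀ j, 0 ≤ w j) ∧ (∀ j i, (A j i).PosSemidef) ∧
    ρ = ∑ j, (w j : ℂ) • prodMat (A j)

def prodAcross {d : ι → ℕ} (S : Finset ι)
    (A : Matrix (Config (fun i : {i // i ∈ S} => d i))
      (Config (fun i : {i // i ∈ S} => d i)) ℂ)
    (B : Matrix (Config (fun i : {i // i ∉ S} => d i))
      (Config (fun i : {i // i ∉ S} => d i)) ℂ) :
    Matrix (Config d) (Config d) ℂ :=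
  fun f g => A (fun i => f i) (fun i => g i) * B (fun i => f i) (fun i => g i)

/-- `ρ` is a mixture of biproduct states with respect to the bipartition `S | Sᶜ`. -/
def SepAcross {d : ι → ℕ} (S : Finset ι)
    (ρ : Matrix (Config d) (Config d) ℂ) : Prop :=
  ∃ (k : ℕ) (w : Fin k → ℝ)
    (A : Fin k → Matrix (Config (fun i : {i // i ∈ S} => d i))
      (Config (fun i : {i // i ∈ S} => d i)) ℂ)
    (B : Fin k → Matrix (Config (fun i : {i // i ∉ S} => d i))
      (Config (fun i : {i // i ∉ S} => d i)) ℂ),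
    (∀ j, 0 ≤ w j) ∧ (∀ j, (A j).PosSemidef ∧ (B j).PosSemidef) ∧
    ρ = ∑ j, (w j : ℂ) • prodAcross S (A j) (B j)

/-- Biseparable: mixture of states, each separable across some nontrivial bipartition. -/
def Bisep {d : ι → ℕ} (ρ : Matrix (Config d) (Config d) ℂ) : Prop :=
  ∃ (k : ℕ) (w : Fin k → ℝ) (S : Fin k → Finset ι)
    (σ : Fin k → Matrix (Config d) (Config d) ℂ),
    (∀ j, 0 ≤ w j) ∧ (∀ j, S j ≠ ∅ ∧ S j ≠ Finset.univ) ∧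
    (∀ j, SepAcross (S j) (σ j)) ∧ ρ = ∑ j, (w j : ℂ) • σ j

def DetectsEnt {d : ι → ℕ} (𝒮 : Finset (Finset ι))
    (ρ : Matrix (Config d) (Config d) ℂ) : Prop :=
  ∀ σ, IsState σ → Compatible 𝒮 ρ σ → ¬ FullySep σ

def lEnt {d : ι → ℕ} (ρ : Matrix (Config d) (Config d) ℂ) : ℕ∞ :=
  sInf {m : ℕ∞ | ∃ 𝒮 : Finset (Finset ι), DetectsEnt 𝒮 ρ ∧
    m = ((𝒮.sup Finset.card : ℕ) : ℕ∞)}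

def DetectsBipa {d : ι → ℕ} (G : Finset ι) (𝒮 : Finset (Finset ι))
    (ρ : Matrix (Config d) (Config d) ℂ) : Prop :=
  ∀ σ, IsState σ → Compatible 𝒮 ρ σ → ¬ SepAcross G σ

def lBipa {d : ι → ℕ} (ρ : Matrix (Config d) (Config d) ℂ)
    (G : Finset ι) : ℕ∞ :=
  sInf {m : ℕ∞ | ∃ 𝒮 : Finset (Finset ι), DetectsBipa G 𝒮 ρ ∧
    m = ((𝒮.sup Finset.card : ℕ) : ℕ∞)}

def DetectsGME {d : ι → ℕ} (𝒮 : Finset (Finset ι))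
    (ρ : Matrix (Config d) (Config d) ℂ) : Prop :=
  ∀ σ, IsState σ → Compatible 𝒮 ρ σ → ¬ Bisep σ

def lGME {d : ι → ℕ} (ρ : Matrix (Config d) (Config d) ℂ) : ℕ∞ :=
  sInf {m : ℕ∞ | ∃ 𝒮 : Finset (Finset ι), DetectsGME 𝒮 ρ ∧
    m = ((𝒮.sup Finset.card : ℕ) : ℕ∞)}
/-- Product of block vectors over a labelling `P : ι → Fin s` of parties into blocks. -/
def ProdOver {d : ι → ℕ} {s : ℕ} (P : ι → Fin s)
    (u : ∀ t : Fin s, (Config (fun i : {i // P i = t} => d i)) → ℂ) :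
    Config d → ℂ :=
  fun f => ∏ t, u t (fun i => f i)

/-- A pure state vector is `s`-separable if it is a product across a partition of the
parties into `s` (nonempty) blocks. -/
def PureSep {d : ι → ℕ} (s : ℕ) (v : Config d → ℂ) : Prop :=
  ∃ P : ι → Fin s, Function.Surjective P ∧
    ∃ u, v = ProdOver (d := d) P u

/-- A mixed state is `s`-separable if it is a convex combination of (at least)
`s`-separable pure states. -/
def SepDeg {d : ι → ℕ} (s : ℕ) (ρ : Matrix (Config d) (Config d) ℂ) : Prop :=
  ∃ (k : ℕ) (w : Fin k → ℝ) (v : Fin k → Config d → ℂ),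
    (∀ j, 0 ≤ w j) ∧ (∀ j, PureSep s (v j)) ∧
    ρ = ∑ j, (w j : ℂ) • Matrix.vecMulVec (v j) (star (v j))

/-- A pure state vector is `k`-producible if it is a product of factors each involving at
most `k` parties. -/
def PureProd {d : ι → ℕ} (k : ℕ) (v : Config d → ℂ) : Prop :=
  ∃ (s : ℕ) (P : ι → Fin s),
    (∀ t : Fin s, (Finset.univ.filter (fun i => P i = t)).card ≤ k) ∧
    ∃ u, v = ProdOver (d := d) P u

/-- A mixed state is `k`-producible if it is a convex combination of `k`-producible pure
states. -/
def Producible {d : ι → ℕ} (k : ℕ) (ρ : Matrix (Config d) (Config d) ℂ) : Prop :=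
  ∃ (kk : ℕ) (w : Fin kk → ℝ) (v : Fin kk → Config d → ℂ),
    (∀ j, 0 ≤ w j) ∧ (∀ j, PureProd k (v j)) ∧
    ρ = ∑ j, (w j : ℂ) • Matrix.vecMulVec (v j) (star (v j))

/-- The minimal number of marginals of size `l_GME(ρ)` needed to detect GME. -/
def mGME {d : ι → ℕ} (ρ : Matrix (Config d) (Config d) ℂ) : ℕ∞ :=
  sInf {m : ℕ∞ | ∃ 𝒮 : Finset (Finset ι), DetectsGME 𝒮 ρ ∧
    (∀ S ∈ 𝒮, (S.card : ℕ∞) = lGME ρ) ∧ m = (𝒮.card : ℕ∞)}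


/-- `𝒮` detects `ρ`'s `k`-depth entanglement: every compatible state has entanglement
depth at least `k`, i.e. is not `(k−1)`-producible. -/
def DetectsDep {d : ι → ℕ} (k : ℕ) (𝒮 : Finset (Finset ι))
    (ρ : Matrix (Config d) (Config d) ℂ) : Prop :=
  ∀ σ, IsState σ → Compatible 𝒮 ρ σ → ¬ Producible (k - 1) σ

def lDep {d : ι → ℕ} (k : ℕ) (ρ : Matrix (Config d) (Config d) ℂ) : ℕ∞ :=
  sInf {m : ℕ∞ | ∃ 𝒮 : Finset (Finset ι), DetectsDep k 𝒮 ρ ∧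
    m = ((𝒮.sup Finset.card : ℕ) : ℕ∞)}

/-!
Let `B` be a block with exactly `k` parties. A `(k - 1)`-producible pure state factors into a part
containing some fixed party of `B` and at most `k - 1` parties in total, and the rest. Both parts
meet `B`, so the marginal on `B` is biseparable. Hence a family of marginals detecting the genuine
entanglement of one such block also detects the depth of the global state.

Conversely, if a family detects the genuine entanglement of no such block, replace the state of each
of them by a compatible biseparable, hence `(k - 1)`-producible one. Smaller blocks are
`(k - 1)`-producible as they stand, and the tensor product is a compatible `(k - 1)`-producible
global state.

The upper bound comes from applying this to the full marginal, the lower bound from the product of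
the one-body marginals, which is compatible with every family of marginals on at most one party.
-/

open Matrix (vecMulVec)

variable {d : ι → ℕ}

/-- Configurations of the parties in `S`. -/
abbrev ConfigOn (d : ι → ℕ) (S : Finset ι) := Config (fun i : {i // i ∈ S} => d i)

/-- Configurations of the parties outside `S`. -/
abbrev ConfigOff (d : ι → ℕ) (S : Finset ι) := Config (fun i : {i // i ∉ S} => d i)

/-- Operators on the Hilbert space of the parties in `S`, as matrices in the product basis. -/
abbrev OpOn (d : ι → ℕ) (S : Finset ι) := Matrix (ConfigOn d S) (ConfigOn d S) ℂ

section Merge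

omit [Fintype ι]

lemma merge_of_mem (S : Finset ι) (f : ConfigOn d S) (g : ConfigOff d S) {i : ι} (hi : i ∈ S) :
    merge S f g i = f ⟨i, hi⟩ :=
  dif_pos hi

lemma merge_of_notMem (S : Finset ι) (f : ConfigOn d S) (g : ConfigOff d S) {i : ι} (hi : i ∉ S) :
    merge S f g i = g ⟨i, hi⟩ :=
  dif_neg hi

lemma restrict_merge (S : Finset ι) (f : ConfigOn d S) (g : ConfigOff d S) :
    S.restrict (merge S f g) = f :=
  funext fun i => merge_of_mem S f g i.2

lemma dependsOn_comp_merge {β : Type*} {a : Config d → β} {A : Set ι} {B : Finset ι}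
    (ha : DependsOn a A) (g : ConfigOff d B) :
    DependsOn (fun f : ConfigOn d B => a (merge B f g)) (Subtype.val ⁻¹' A) := by
  refine fun x y hxy => ha fun i hi => ?_
  by_cases hB : i ∈ B
  · rw [merge_of_mem B x g hB, merge_of_mem B y g hB, hxy ⟨i, hB⟩ hi]
  · rw [merge_of_notMem B x g hB, merge_of_notMem B y g hB]

end Merge

lemma sum_merge {M : Type*} [AddCommMonoid M] (S : Finset ι) (F : Config d → M) :
    ∑ x, F x = ∑ f, ∑ g, F (merge S f g) := by
  rw [← Fintype.sum_prod_type' (f := fun f g => F (merge S f g))]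
  exact ((Equiv.piEquivPiSubtypeProd (· ∈ S) fun i => Fin (d i)).symm.sum_comp F).symm

section Marginal

lemma trace_marginal (S : Finset ι) (ρ : Matrix (Config d) (Config d) ℂ) :
    (marginal S ρ).trace = ρ.trace :=
  (sum_merge S fun x => ρ x x).symm

lemma posSemidef_marginal (S : Finset ι) {ρ : Matrix (Config d) (Config d) ℂ}
    (hρ : ρ.PosSemidef) : (marginal S ρ).PosSemidef := by
  have hsum : marginal S ρ = ∑ h, ρ.submatrix (merge S · h) (merge S · h) := by
    ext f g
    simp [marginal, Matrix.sum_apply]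
  rw [hsum]
  exact Matrix.posSemidef_sum _ fun h _ => hρ.submatrix _

lemma IsState.marginal (S : Finset ι) {ρ : Matrix (Config d) (Config d) ℂ} (hρ : IsState ρ) :
    IsState (marginal S ρ) :=
  ⟨posSemidef_marginal S hρ.1, (trace_marginal S ρ).trans hρ.2⟩

lemma marginal_of_eq_empty {S : Finset ι} (hS : S = ∅) (ρ : Matrix (Config d) (Config d) ℂ)
    (f g : ConfigOn d S) : marginal S ρ f g = ρ.trace := by
  subst hS
  rw [← trace_marginal ∅ ρ, Matrix.trace, Fintype.sum_subsingleton _ f, Subsingleton.elim g f]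
  rfl

lemma marginal_of_eq_univ {S : Finset ι} (hS : S = Finset.univ)
    (ρ : Matrix (Config d) (Config d) ℂ) (x y : Config d) :
    marginal S ρ (S.restrict x) (S.restrict y) = ρ x y := by
  subst hS
  have hmerge (z : Config d) (h : ConfigOff d (Finset.univ : Finset ι)) :
      merge Finset.univ (Finset.univ.restrict z) h = z :=
    funext fun i => merge_of_mem _ _ _ (Finset.mem_univ i)
  have : IsEmpty {i // i ∉ (Finset.univ : Finset ι)} := ⟨fun i => i.2 (Finset.mem_univ _)⟩
  rw [marginal, Fintype.sum_unique, hmerge, hmerge]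

lemma marginal_univ_injective :
    Function.Injective (marginal (d := d) Finset.univ) := fun ρ σ h => by
  ext x y
  rw [← marginal_of_eq_univ rfl ρ, h, marginal_of_eq_univ rfl σ]

lemma compatible_singleton_univ {ρ σ : Matrix (Config d) (Config d) ℂ} :
    Compatible {Finset.univ} ρ σ ↔ σ = ρ := by
  simp [Compatible, marginal_univ_injective.eq_iff]

lemma sum_mul_marginal (S : Finset ι) (ρ : Matrix (Config d) (Config d) ℂ)
    (G : ConfigOn d S → ConfigOn d S → ℂ) :
    ∑ f, ∑ g, G f g * marginal S ρ f g =
      ∑ x : Config d, ∑ y : Config d,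
        if ∀ i ∉ S, x i = y i then G (S.restrict x) (S.restrict y) * ρ x y else 0 := by
  have agree_iff (f g : ConfigOn d S) (h h' : ConfigOff d S) :
      (∀ i ∉ S, merge S f h i = merge S g h' i) ↔ h = h' := by
    rw [funext_iff, Subtype.forall]
    refine forall₂_congr fun i hi => ?_
    rw [merge_of_notMem S f h hi, merge_of_notMem S g h' hi]
  rw [sum_merge S]
  refine Finset.sum_congr rfl fun f _ => ?_
  simp_rw [sum_merge S, agree_iff, restrict_merge, Finset.sum_ite_eq, Finset.mem_univ, if_true]
  rw [Finset.sum_comm]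
  exact Finset.sum_congr rfl fun g _ => Finset.mul_sum ..

/-- Summing over configurations of the whole system lets iterated marginals and marginals of tensor
products be compared condition by condition. -/
lemma marginal_apply_eq_sum_ite (S : Finset ι) (ρ : Matrix (Config d) (Config d) ℂ)
    (f g : ConfigOn d S) :
    marginal S ρ f g = ∑ x : Config d, ∑ y : Config d,
      if S.restrict x = f ∧ S.restrict y = g ∧ ∀ i ∉ S, x i = y i then ρ x y else 0 := by
  calc
    marginal S ρ f g = ∑ f', ∑ g', (if f' = f ∧ g' = g then 1 else 0) * marginal S ρ f' g' := by
      rw [Finset.sum_eq_single f, Finset.sum_eq_single g] <;> simp +contextual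
    _ = _ := by
      rw [sum_mul_marginal]
      refine Finset.sum_congr rfl fun x _ => Finset.sum_congr rfl fun y _ => ?_
      rw [ite_mul, one_mul, zero_mul, ← ite_and]
      exact if_congr (by tauto) rfl rfl

/-- A configuration of the parties in `S`, a set of parties of the block `B`, with these parties
regarded as parties of the whole system. -/
def unnest {B : Finset ι} {S : Finset {i // i ∈ B}}
    (f : ConfigOn (fun i : {i // i ∈ B} => d i) S) :
    ConfigOn d (S.map (Function.Embedding.subtype _)) := fun i =>
  f ⟨⟨i, S.property_of_mem_map_subtype i.2⟩, by
    obtain ⟨i, hi⟩ := i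
    obtain ⟨j, hj, rfl⟩ := Finset.mem_map.1 hi
    exact hj⟩

/-- The part inside the block `B` of a configuration of the parties in `S`. -/
def restrictBlock (B : Finset ι) {S : Finset ι} (f : ConfigOn d S) :
    ConfigOn (fun i : {i // i ∈ B} => d i) (S.subtype (· ∈ B)) := fun i =>
  f ⟨i.1, Finset.mem_subtype.1 i.2⟩

omit [Fintype ι] [DecidableEq ι] in
lemma restrict_restrict_eq_iff_eq_unnest {B : Finset ι} {S : Finset {i // i ∈ B}} (x : Config d)
    (f : ConfigOn (fun i : {i // i ∈ B} => d i) S) :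
    S.restrict (B.restrict x) = f ↔
      (S.map (Function.Embedding.subtype _)).restrict x = unnest f := by
  simp [funext_iff, unnest]

lemma marginal_marginal (B : Finset ι) (S : Finset {i // i ∈ B})
    (ρ : Matrix (Config d) (Config d) ℂ) :
    marginal S (marginal B ρ) =
      (marginal (S.map (Function.Embedding.subtype _)) ρ).submatrix unnest unnest := by
  ext f g
  rw [Matrix.submatrix_apply, marginal_apply_eq_sum_ite, marginal_apply_eq_sum_ite]
  have hsum := sum_mul_marginal B ρ fun x y =>
    if S.restrict x = f ∧ S.restrict y = g ∧ ∀ i ∉ S, x i = y i then 1 else 0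
  simp only [ite_mul, one_mul, zero_mul, ← ite_and] at hsum
  rw [hsum]
  refine Finset.sum_congr rfl fun x _ => Finset.sum_congr rfl fun y _ => if_congr ?_ rfl rfl
  have agree_iff : ((∀ i ∉ B, x i = y i) ∧ ∀ i ∉ S, B.restrict x i = B.restrict y i) ↔
      ∀ i ∉ S.map (Function.Embedding.subtype _), x i = y i := by
    simp only [Finset.mem_map, Function.Embedding.subtype_apply, Subtype.forall, Finset.restrict]
    grind
  rw [restrict_restrict_eq_iff_eq_unnest, restrict_restrict_eq_iff_eq_unnest, ← agree_iff]
  tauto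

lemma Compatible.marginal {B : Finset ι} {𝒮 : Finset (Finset {i // i ∈ B})}
    {ρ σ : Matrix (Config d) (Config d) ℂ}
    (h : Compatible (𝒮.image (Finset.map (Function.Embedding.subtype _))) ρ σ) :
    Compatible 𝒮 (marginal B ρ) (marginal B σ) := fun S hS => by
  rw [marginal_marginal, marginal_marginal, h _ (Finset.mem_image_of_mem _ hS)]

end Marginal

section Partition

variable {T : Type*} {B : T → Finset ι}

/-- The blocks `B t` partition the set of all parties; some of them may be empty. -/
structure IsPartition (B : T → Finset ι) : Prop where
  disjoint : ∀ t t', t ≠ t' → Disjoint (B t) (B t')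
  exists_mem : ∀ i, ∃ t, i ∈ B t

omit [Fintype ι] [DecidableEq ι]

lemma isPartition_singleton : IsPartition fun i : ι => ({i} : Finset ι) :=
  ⟨fun _ _ => Finset.disjoint_singleton.2, fun i => ⟨i, Finset.mem_singleton_self i⟩⟩

lemma IsPartition.eq_of_mem (hB : IsPartition B) {i : ι} {t t' : T} (ht : i ∈ B t)
    (ht' : i ∈ B t') : t = t' := by
  by_contra hne
  exact Finset.disjoint_left.1 (hB.disjoint t t' hne) ht ht'

lemma IsPartition.restrict_bijective (hB : IsPartition B) :
    Function.Bijective fun (x : Config d) t => (B t).restrict x := by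
  refine ⟨fun x y hxy => funext fun i => ?_, fun y => ?_⟩
  · obtain ⟨t, ht⟩ := hB.exists_mem i
    exact congrFun (congrFun hxy t) ⟨i, ht⟩
  · choose b hb using hB.exists_mem
    refine ⟨fun i => y (b i) ⟨i, hb i⟩, funext fun t => funext fun ⟨i, hi⟩ => ?_⟩
    obtain rfl := hB.eq_of_mem (hb i) hi
    rfl

end Partition

section Tensor

variable {T : Type*} [Fintype T] {B : T → Finset ι}

/-- The tensor product of the vectors `v t` on the blocks `B t`. -/
def blockVec (B : T → Finset ι) (v : ∀ t, ConfigOn d (B t) → ℂ) : Config d → ℂ :=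
  fun f => ∏ t, v t ((B t).restrict f)

/-- The tensor product of the operators `σ t` on the blocks `B t`. -/
def blockTensor (B : T → Finset ι) (σ : ∀ t, OpOn d (B t)) : Matrix (Config d) (Config d) ℂ :=
  fun f g => ∏ t, σ t ((B t).restrict f) ((B t).restrict g)

omit [Fintype ι] [DecidableEq ι] in
lemma vecMulVec_blockVec (v : ∀ t, ConfigOn d (B t) → ℂ) :
    vecMulVec (blockVec B v) (star (blockVec B v)) =
      blockTensor B fun t => vecMulVec (v t) (star (v t)) := by
  ext f g
  simp [blockVec, blockTensor, Matrix.vecMulVec_apply, Finset.prod_mul_distrib]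

lemma IsPartition.sum_prod_restrict {R : Type*} [CommSemiring R] (hB : IsPartition B)
    (F : ∀ t, ConfigOn d (B t) → R) :
    ∑ x : Config d, ∏ t, F t ((B t).restrict x) = ∏ t, ∑ y, F t y := by
  classical
  rw [Finset.prod_univ_sum, Fintype.piFinset_univ]
  exact hB.restrict_bijective.sum_comp fun y => ∏ t, F t (y t)

lemma trace_blockTensor (hB : IsPartition B) (σ : ∀ t, OpOn d (B t)) :
    (blockTensor B σ).trace = ∏ t, (σ t).trace :=
  hB.sum_prod_restrict fun t y => σ t y y

lemma marginal_blockTensor (hB : IsPartition B) (σ : ∀ t, OpOn d (B t)) (S : Finset ι)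
    (f g : ConfigOn d S) :
    marginal S (blockTensor B σ) f g =
      ∏ t, marginal (S.subtype (· ∈ B t)) (σ t) (restrictBlock (B t) f)
        (restrictBlock (B t) g) := by
  have blockwise_iff (x y : Config d) :
      (S.restrict x = f ∧ S.restrict y = g ∧ ∀ i ∉ S, x i = y i) ↔
        ∀ t, (S.subtype (· ∈ B t)).restrict ((B t).restrict x) = restrictBlock (B t) f ∧
          (S.subtype (· ∈ B t)).restrict ((B t).restrict y) = restrictBlock (B t) g ∧
          ∀ i ∉ S.subtype (· ∈ B t), (B t).restrict x i = (B t).restrict y i := by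
    simp only [funext_iff, Subtype.forall, Finset.restrict, restrictBlock, Finset.mem_subtype]
    constructor
    · rintro ⟨hx, hy, hxy⟩ t
      exact ⟨fun i _ hi => hx i hi, fun i _ hi => hy i hi, fun i _ hi => hxy i hi⟩
    · choose b hb using hB.exists_mem
      exact fun h => ⟨fun i hi => (h (b i)).1 i (hb i) hi,
        fun i hi => (h (b i)).2.1 i (hb i) hi, fun i hi => (h (b i)).2.2 i (hb i) hi⟩
  simp_rw [marginal_apply_eq_sum_ite, ← hB.sum_prod_restrict]
  refine Finset.sum_congr rfl fun x _ => Finset.sum_congr rfl fun y _ => ?_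
  rw [Finset.prod_ite_zero]
  exact if_congr (by simpa using blockwise_iff x y) rfl rfl

lemma marginal_blockTensor_block (hB : IsPartition B) {σ : ∀ t, OpOn d (B t)}
    (hσ : ∀ t, (σ t).trace = 1) (t : T) : marginal (B t) (blockTensor B σ) = σ t := by
  ext f g
  rw [marginal_blockTensor hB, Finset.prod_eq_single t]
  · exact marginal_of_eq_univ (by ext; simp) (σ t) f g
  · intro t' _ hne
    rw [marginal_of_eq_empty _ (σ t'), hσ]
    exact Finset.subtype_eq_empty.2 fun i hi' hi => hne (hB.eq_of_mem hi' hi)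
  · simp

lemma Compatible.blockTensor (hB : IsPartition B) {𝒮 : Finset (Finset ι)}
    {φ σ : ∀ t, OpOn d (B t)}
    (h : ∀ t, Compatible (𝒮.image (Finset.subtype (· ∈ B t))) (φ t) (σ t)) :
    Compatible 𝒮 (blockTensor B φ) (blockTensor B σ) := fun S hS => by
  ext f g
  rw [marginal_blockTensor hB, marginal_blockTensor hB]
  exact Finset.prod_congr rfl fun t _ => by rw [h t _ (Finset.mem_image_of_mem _ hS)]

end Tensor

section PureProducibility

omit [DecidableEq ι]

variable {k : ℕ}

lemma pureProd_of_dependsOn {T : Type*} [Fintype T] [DecidableEq T] {P : ι → T}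
    (hP : ∀ t, (Finset.univ.filter (P · = t)).card ≤ k) {u : T → Config d → ℂ}
    (hu : ∀ t, DependsOn (u t) {i | P i = t}) : PureProd k (fun f => ∏ t, u t f) := by
  let e := Fintype.equivFin T
  have hu' (t) : DependsOn (u (e.symm t)) {i | e (P i) = t} := by
    simpa only [← Equiv.eq_symm_apply] using hu (e.symm t)
  choose g hg using fun t => dependsOn_iff_exists_comp.1 (hu' t)
  refine ⟨Fintype.card T, e ∘ P, fun t => ?_, g, ?_⟩
  · simpa [← Equiv.eq_symm_apply] using hP (e.symm t)
  · funext f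
    rw [ProdOver, ← e.symm.prod_comp]
    exact Finset.prod_congr rfl fun t _ => congrFun (hg t) f

lemma pureProd_of_card_le (h : Fintype.card ι ≤ k) (v : Config d → ℂ) : PureProd k v := by
  simpa using pureProd_of_dependsOn (P := fun _ : ι => ()) (by simpa using h)
    (u := fun _ => v) (by simpa using dependsOn_univ v)

/-- The product vector `a ⊗ c` across the bipartition `S | Sᶜ`, the analogue of `prodAcross` for
state vectors. -/
def vecAcross (S : Finset ι) (a : ConfigOn d S → ℂ) (c : ConfigOff d S → ℂ) : Config d → ℂ :=
  fun f => a (fun i => f i) * c (fun i => f i)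

omit [Fintype ι] in
lemma vecMulVec_vecAcross (S : Finset ι) (a : ConfigOn d S → ℂ) (c : ConfigOff d S → ℂ) :
    vecMulVec (vecAcross S a c) (star (vecAcross S a c)) =
      prodAcross S (vecMulVec a (star a)) (vecMulVec c (star c)) := by
  ext f g
  simp only [vecAcross, prodAcross, Matrix.vecMulVec_apply, Pi.star_apply, star_mul']
  ring

lemma pureProd_vecAcross [DecidableEq ι] {S : Finset ι} (hS : S.card ≤ k) (hS' : Sᶜ.card ≤ k)
    (a : ConfigOn d S → ℂ) (c : ConfigOff d S → ℂ) : PureProd k (vecAcross S a c) := by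
  have hprod : vecAcross S a c = fun f =>
      ∏ t : Bool, bif t then a (fun i => f i) else c (fun i => f i) := by
    funext f
    simp [vecAcross]
  rw [hprod]
  refine pureProd_of_dependsOn (P := fun i => decide (i ∈ S)) (Bool.forall_bool.2 ⟨?_, ?_⟩)
    (Bool.forall_bool.2 ⟨fun x y hxy => ?_, fun x y hxy => ?_⟩)
  · simpa [← Finset.compl_filter] using hS'
  · simpa using hS
  · exact congrArg c (funext fun i => hxy i (by simp))
  · exact congrArg a (funext fun i => hxy i (by simp))

lemma pureProd_blockVec {T : Type*} [Fintype T] {B : T → Finset ι} (hB : IsPartition B)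
    {v : ∀ t, ConfigOn d (B t) → ℂ} (hv : ∀ t, PureProd k (v t)) :
    PureProd k (blockVec B v) := by
  classical
  choose s P hP u hu using hv
  choose b hb using hB.exists_mem
  have hprod : blockVec B v = fun f => ∏ p : Σ t, Fin (s t), u p.1 p.2 fun i => f i.1 := by
    funext f
    simp only [blockVec, hu, ProdOver, Fintype.prod_sigma]
    rfl
  rw [hprod]
  refine pureProd_of_dependsOn (P := fun i => ⟨b i, P (b i) ⟨i, hb i⟩⟩) ?_ ?_
  · rintro ⟨t, r⟩
    refine le_trans ?_ (hP t r)
    rw [← Finset.card_map (Function.Embedding.subtype _)]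
    refine Finset.card_le_card fun i hi => ?_
    cases (Finset.mem_filter.1 hi).2
    simp [hb i]
  · rintro ⟨t, r⟩ x y hxy
    refine congrArg (u t r) (funext fun ⟨⟨i, hi⟩, hr⟩ => hxy i ?_)
    obtain rfl := hB.eq_of_mem (hb i) hi
    exact congrArg (Sigma.mk (b i)) hr

lemma PureProd.exists_dependsOn_mul {v : Config d → ℂ} (hv : PureProd k v) (i₀ : ι) :
    ∃ (S : Finset ι) (a c : Config d → ℂ), i₀ ∈ S ∧ S.card ≤ k ∧ DependsOn a {i | i ∈ S} ∧
      DependsOn c {i | i ∉ S} ∧ v = a * c := by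
  classical
  obtain ⟨s, P, hP, u, rfl⟩ := hv
  refine ⟨Finset.univ.filter (P · = P i₀), fun f => u (P i₀) fun i => f i,
    fun f => ∏ t ∈ Finset.univ.erase (P i₀), u t fun i => f i, by simp, hP _,
    fun x y hxy => congrArg _ (funext fun i => hxy i (by simp)),
    fun x y hxy => Finset.prod_congr rfl fun t ht => congrArg _ (funext fun i => hxy i ?_), ?_⟩
  · simpa [i.2] using Finset.ne_of_mem_erase ht
  · exact funext fun f => (Finset.mul_prod_erase _ _ (Finset.mem_univ _)).symm

end PureProducibility

lemma mem_hull_iff_exists_sum {R V : Type*} [Semiring R] [PartialOrder R] [IsOrderedRing R]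
    [AddCommMonoid V] [Module R V] {s : Set V} {x : V} :
    x ∈ PointedCone.hull R s ↔ ∃ (n : ℕ) (w : Fin n → R) (a : Fin n → V),
      (∀ j, 0 ≤ w j) ∧ (∀ j, a j ∈ s) ∧ x = ∑ j, w j • a j := by
  rw [PointedCone.hull, Submodule.mem_span_set']
  constructor
  · rintro ⟨n, w, a, rfl⟩
    exact ⟨n, fun j => w j, fun j => a j, fun j => (w j).2, fun j => (a j).2, rfl⟩
  · rintro ⟨n, w, a, hw, ha, rfl⟩
    exact ⟨n, fun j => ⟨w j, hw j⟩, fun j => ⟨a j, ha j⟩, rfl⟩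

lemma ofReal_smul_mem {V : Type*} [AddCommGroup V] [Module ℂ V] (C : PointedCone ℝ V) {w : ℝ}
    (hw : 0 ≤ w) {x : V} (hx : x ∈ C) : (w : ℂ) • x ∈ C := by
  rw [Complex.coe_smul]
  exact C.smul_mem hw hx

section Cones

variable {k : ℕ}

/-- The convex cone of (unnormalised) `k`-producible mixed states; being a cone makes
`Producible k` closed under mixtures. -/
def producibleCone (d : ι → ℕ) (k : ℕ) : PointedCone ℝ (Matrix (Config d) (Config d) ℂ) :=
  PointedCone.hull ℝ ((fun v => vecMulVec v (star v)) '' {v | PureProd k v})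

/-- The convex cone of (unnormalised) biseparable mixed states; being a cone makes `Bisep`
closed under mixtures. -/
def bisepCone (d : ι → ℕ) : PointedCone ℝ (Matrix (Config d) (Config d) ℂ) :=
  PointedCone.hull ℝ {σ | ∃ S : Finset ι, (S ≠ ∅ ∧ S ≠ Finset.univ) ∧ SepAcross S σ}

omit [DecidableEq ι]

lemma mem_producibleCone {σ : Matrix (Config d) (Config d) ℂ} :
    σ ∈ producibleCone d k ↔ Producible k σ := by
  rw [producibleCone, mem_hull_iff_exists_sum]
  constructor
  · rintro ⟨n, w, a, hw, ha, rfl⟩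
    choose v hv hva using ha
    exact ⟨n, w, v, hw, hv, by simp_rw [Complex.coe_smul, hva]⟩
  · rintro ⟨n, w, v, hw, hv, rfl⟩
    exact ⟨n, w, _, hw, fun j => Set.mem_image_of_mem _ (hv j), by simp_rw [Complex.coe_smul]⟩

lemma mem_bisepCone {σ : Matrix (Config d) (Config d) ℂ} : σ ∈ bisepCone d ↔ Bisep σ := by
  rw [bisepCone, mem_hull_iff_exists_sum]
  constructor
  · rintro ⟨n, w, τ, hw, hτ, rfl⟩
    choose S hS hsep using hτ
    exact ⟨n, w, S, τ, hw, hS, hsep, by simp_rw [Complex.coe_smul]⟩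
  · rintro ⟨n, w, S, τ, hw, hS, hsep, rfl⟩
    exact ⟨n, w, τ, hw, fun j => ⟨S j, hS j, hsep j⟩, by simp_rw [Complex.coe_smul]⟩

lemma PureProd.vecMulVec_mem_producibleCone {v : Config d → ℂ} (hv : PureProd k v) :
    vecMulVec v (star v) ∈ producibleCone d k :=
  PointedCone.subset_hull (Set.mem_image_of_mem _ hv)

lemma SepAcross.mem_bisepCone {S : Finset ι} (hS : S ≠ ∅) (hS' : S ≠ Finset.univ)
    {σ : Matrix (Config d) (Config d) ℂ} (hσ : SepAcross S σ) : σ ∈ bisepCone d :=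
  PointedCone.subset_hull ⟨S, ⟨hS, hS'⟩, hσ⟩

end Cones

section Producibility

variable {k : ℕ}

omit [DecidableEq ι]

lemma Producible.posSemidef {σ : Matrix (Config d) (Config d) ℂ} (hσ : Producible k σ) :
    σ.PosSemidef := by
  obtain ⟨n, w, v, hw, -, rfl⟩ := hσ
  exact Matrix.posSemidef_sum _ fun j _ =>
    (Matrix.posSemidef_vecMulVec_self_star (v j)).smul (by exact_mod_cast hw j)

lemma producible_of_card_le (h : Fintype.card ι ≤ k) {σ : Matrix (Config d) (Config d) ℂ}
    (hσ : σ.PosSemidef) : Producible k σ := by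
  obtain ⟨m, v, rfl⟩ := Matrix.posSemidef_iff_eq_sum_vecMulVec.1 hσ
  exact mem_producibleCone.1 <| sum_mem fun j _ =>
    (pureProd_of_card_le h (v j)).vecMulVec_mem_producibleCone

omit [Fintype ι] in
lemma prodAcross_sum_sum {S : Finset ι} {I J : Type*} [Fintype I] [Fintype J]
    (A : I → OpOn d S) (C : J → Matrix (ConfigOff d S) (ConfigOff d S) ℂ) :
    prodAcross S (∑ i, A i) (∑ j, C j) = ∑ i, ∑ j, prodAcross S (A i) (C j) := by
  ext f g
  simp only [prodAcross, Matrix.sum_apply, Finset.sum_mul_sum]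

lemma producible_prodAcross [DecidableEq ι] {S : Finset ι} (hS : S.card ≤ k) (hS' : Sᶜ.card ≤ k)
    {A : OpOn d S} {C : Matrix (ConfigOff d S) (ConfigOff d S) ℂ}
    (hA : A.PosSemidef) (hC : C.PosSemidef) : Producible k (prodAcross S A C) := by
  obtain ⟨m, a, rfl⟩ := Matrix.posSemidef_iff_eq_sum_vecMulVec.1 hA
  obtain ⟨n, c, rfl⟩ := Matrix.posSemidef_iff_eq_sum_vecMulVec.1 hC
  rw [prodAcross_sum_sum]
  refine mem_producibleCone.1 <| sum_mem fun i _ => sum_mem fun j _ => ?_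
  rw [← vecMulVec_vecAcross]
  exact (pureProd_vecAcross hS hS' (a i) (c j)).vecMulVec_mem_producibleCone

lemma Bisep.producible {σ : Matrix (Config d) (Config d) ℂ} (hσ : Bisep σ) :
    Producible (Fintype.card ι - 1) σ := by
  classical
  obtain ⟨n, w, S, τ, hw, hS, hτ, rfl⟩ := hσ
  refine mem_producibleCone.1 <| sum_mem fun j _ => ofReal_smul_mem _ (hw j) ?_
  obtain ⟨n', w', A, C, hw', hAC, hτj⟩ := hτ j
  have hcard : (S j).card ≤ Fintype.card ι - 1 :=
    Nat.le_sub_one_of_lt ((Finset.card_lt_iff_ne_univ _).2 (hS j).2)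
  have hcard_compl : (S j)ᶜ.card ≤ Fintype.card ι - 1 :=
    Nat.le_sub_one_of_lt ((Finset.card_lt_iff_ne_univ _).2 (by simpa using (hS j).1))
  rw [hτj]
  exact sum_mem fun i _ => ofReal_smul_mem _ (hw' i) <|
    mem_producibleCone.2 (producible_prodAcross hcard hcard_compl (hAC i).1 (hAC i).2)

variable {T : Type*} [Fintype T] {B : T → Finset ι}

lemma producible_blockTensor (hB : IsPartition B) {σ : ∀ t, OpOn d (B t)}
    (hσ : ∀ t, Producible k (σ t)) : Producible k (blockTensor B σ) := by
  classical
  choose n w v hw hv hσv using hσ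
  have hexpand : blockTensor B σ = ∑ c : ∀ t, Fin (n t), (∏ t, w t (c t)) •
      vecMulVec (blockVec B fun t => v t (c t)) (star (blockVec B fun t => v t (c t))) := by
    ext f g
    simp_rw [vecMulVec_blockVec]
    simp only [blockTensor, hσv, Matrix.sum_apply, Finset.prod_univ_sum, Fintype.piFinset_univ,
      Matrix.smul_apply, smul_eq_mul, Finset.prod_mul_distrib, Complex.real_smul,
      Complex.ofReal_prod]
  rw [hexpand]
  exact mem_producibleCone.1 <| sum_mem fun c _ =>
    (producibleCone d k).smul_mem (Finset.prod_nonneg fun t _ => hw t (c t))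
      (pureProd_blockVec hB fun t => hv t (c t)).vecMulVec_mem_producibleCone

lemma IsState.blockTensor [DecidableEq ι] (hB : IsPartition B) {σ : ∀ t, OpOn d (B t)}
    (hσ : ∀ t, IsState (σ t)) : IsState (blockTensor B σ) := by
  have hprod (t) : Producible (Fintype.card ι) (σ t) :=
    producible_of_card_le ((Fintype.card_coe (B t)).trans_le (B t).card_le_univ) (hσ t).1
  refine ⟨(producible_blockTensor hB hprod).posSemidef, ?_⟩
  rw [trace_blockTensor hB, Finset.prod_eq_one fun t _ => (hσ t).2]

end Producibility

section Bisep

omit [Fintype ι] [DecidableEq ι] in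
lemma sepAcross_prodAcross {S : Finset ι} {A : OpOn d S}
    {C : Matrix (ConfigOff d S) (ConfigOff d S) ℂ}
    (hA : A.PosSemidef) (hC : C.PosSemidef) : SepAcross S (prodAcross S A C) :=
  ⟨1, fun _ => 1, fun _ => A, fun _ => C, fun _ => zero_le_one, fun _ => ⟨hA, hC⟩, by simp⟩

omit [Fintype ι] [DecidableEq ι] in
lemma sepAcross_vecMulVec_mul [Finite ι] {S : Finset ι} {a c : Config d → ℂ}
    (ha : DependsOn a {i | i ∈ S}) (hc : DependsOn c {i | i ∉ S}) :
    SepAcross S (vecMulVec (a * c) (star (a * c))) := by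
  obtain ⟨a, rfl⟩ := dependsOn_iff_exists_comp.1 ha
  obtain ⟨c, rfl⟩ := dependsOn_iff_exists_comp.1 hc
  change SepAcross S (vecMulVec (vecAcross S a c) (star (vecAcross S a c)))
  rw [vecMulVec_vecAcross]
  exact sepAcross_prodAcross (Matrix.posSemidef_vecMulVec_self_star a)
    (Matrix.posSemidef_vecMulVec_self_star (n := ConfigOff d S) c)

lemma marginal_sum_smul {J : Type*} [Fintype J] (B : Finset ι) (w : J → ℂ)
    (σ : J → Matrix (Config d) (Config d) ℂ) :
    marginal B (∑ j, w j • σ j) = ∑ j, w j • marginal B (σ j) := by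
  ext f g
  simp only [marginal, Matrix.sum_apply, Matrix.smul_apply, Finset.smul_sum]
  exact Finset.sum_comm

lemma marginal_vecMulVec (B : Finset ι) (v : Config d → ℂ) :
    marginal B (vecMulVec v (star v)) =
      ∑ h, vecMulVec (fun f => v (merge B f h)) (star fun f => v (merge B f h)) := by
  ext f g
  rw [Matrix.sum_apply]
  rfl

variable {k : ℕ} {B : Finset ι}

lemma PureProd.marginal_mem_bisepCone {v : Config d → ℂ} (hv : PureProd k v) (hB : k < B.card) :
    marginal B (vecMulVec v (star v)) ∈ bisepCone (fun i : {i // i ∈ B} => d i) := by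
  obtain ⟨i₀, hi₀⟩ : B.Nonempty := Finset.card_pos.1 (Nat.zero_lt_of_lt hB)
  obtain ⟨S, a, c, hi₀S, hS, ha, hc, rfl⟩ := hv.exists_dependsOn_mul i₀
  have hne_empty : S.subtype (· ∈ B) ≠ ∅ := fun h =>
    Finset.subtype_eq_empty.1 h i₀ hi₀ hi₀S
  have hne_univ : S.subtype (· ∈ B) ≠ Finset.univ := fun h => by
    have hBS : B ⊆ S := fun i hi =>
      Finset.mem_subtype.1 (Finset.eq_univ_iff_forall.1 h ⟨i, hi⟩)
    exact absurd (Finset.card_le_card hBS) (by lia)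
  rw [marginal_vecMulVec]
  refine sum_mem fun h _ => SepAcross.mem_bisepCone hne_empty hne_univ ?_
  apply sepAcross_vecMulVec_mul <;> simp only [Finset.mem_subtype]
  exacts [dependsOn_comp_merge ha h, dependsOn_comp_merge hc h]

lemma Producible.bisep_marginal {σ : Matrix (Config d) (Config d) ℂ} (hσ : Producible k σ)
    (hB : k < B.card) : Bisep (marginal B σ) := by
  obtain ⟨n, w, v, hw, hv, rfl⟩ := hσ
  rw [← mem_bisepCone, marginal_sum_smul]
  exact sum_mem fun j _ => ofReal_smul_mem _ (hw j) ((hv j).marginal_mem_bisepCone hB)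

end Bisep

section DetectionLength

variable {k : ℕ} {ρ : Matrix (Config d) (Config d) ℂ}

lemma lGME_le_of_detectsGME {𝒮 : Finset (Finset ι)} (h : DetectsGME 𝒮 ρ) :
    lGME ρ ≤ (𝒮.sup Finset.card : ℕ) :=
  sInf_le ⟨𝒮, h, rfl⟩

lemma lGME_le_card (hρ : ¬ Bisep ρ) : lGME ρ ≤ Fintype.card ι := by
  have hdetects : DetectsGME {Finset.univ} ρ := fun σ _ hσ => by
    rwa [compatible_singleton_univ.1 hσ]
  simpa using lGME_le_of_detectsGME hdetects

lemma DetectsGME.not_bisep {𝒮 : Finset (Finset ι)} (h : DetectsGME 𝒮 ρ) (hρ : IsState ρ) :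
    ¬ Bisep ρ :=
  h ρ hρ fun _ _ => rfl

lemma DetectsGME.detectsDep (hk : 0 < k) {B : Finset ι} (hB : k ≤ B.card)
    {𝒮 : Finset (Finset {i // i ∈ B})} (h : DetectsGME 𝒮 (marginal B ρ)) :
    DetectsDep k (𝒮.image (Finset.map (Function.Embedding.subtype _))) ρ :=
  fun _ hσ hcomp hprod => h _ (hσ.marginal B) hcomp.marginal (hprod.bisep_marginal (by lia))

lemma lDep_le_lGME_marginal (hk : 0 < k) {B : Finset ι} (hB : k ≤ B.card)
    (ρ : Matrix (Config d) (Config d) ℂ) : lDep k ρ ≤ lGME (marginal B ρ) := by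
  refine le_sInf ?_
  rintro _ ⟨𝒮, h𝒮, rfl⟩
  refine sInf_le ⟨_, h𝒮.detectsDep hk hB, ?_⟩
  simp [Finset.sup_image, Function.comp_def]

omit [Fintype ι] in
lemma sup_card_image_subtype_le (𝒮 : Finset (Finset ι)) (B : Finset ι) :
    (𝒮.image (Finset.subtype (· ∈ B))).sup Finset.card ≤ 𝒮.sup Finset.card := by
  rw [Finset.sup_image]
  refine Finset.sup_mono_fun fun S _ => ?_
  rw [Function.comp_apply, Finset.card_subtype]
  exact Finset.card_filter_le _ _

lemma two_le_lDep (hk : 2 ≤ k) (hρ : IsState ρ) : 2 ≤ lDep k ρ := by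
  refine le_sInf ?_
  rintro _ ⟨𝒮, h𝒮, rfl⟩
  by_contra! hlt
  have hcard : ∀ S ∈ 𝒮, S.card ≤ 1 := fun S hS =>
    (Finset.le_sup hS).trans (Nat.le_of_lt_succ (by exact_mod_cast hlt))
  have hstate (i) : IsState (marginal {i} ρ) := hρ.marginal {i}
  have htensor := IsState.blockTensor isPartition_singleton hstate
  have hprod (i) : Producible (k - 1) (marginal {i} ρ) :=
    producible_of_card_le (by simp; lia) (hstate i).1
  refine h𝒮 _ htensor (fun S hS => ?_) (producible_blockTensor isPartition_singleton hprod)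
  rcases Nat.le_one_iff_eq_zero_or_eq_one.1 (hcard S hS) with hS | hS
  · ext f g
    rw [Finset.card_eq_zero] at hS
    rw [marginal_of_eq_empty hS, marginal_of_eq_empty hS, htensor.2, hρ.2]
  · obtain ⟨i, rfl⟩ := Finset.card_eq_one.1 hS
    exact marginal_blockTensor_block isPartition_singleton (fun i => (hstate i).2) i

variable {T : Type*} [Fintype T] {B : T → Finset ι} {φ : ∀ t, OpOn d (B t)}

lemma DetectsDep.exists_detectsGME (hB : IsPartition B) (hsize : ∀ t, (B t).card ≤ k)
    (hφ : ∀ t, IsState (φ t)) {𝒮 : Finset (Finset ι)} (h : DetectsDep k 𝒮 (blockTensor B φ)) :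
    ∃ t, (B t).card = k ∧ DetectsGME (𝒮.image (Finset.subtype (· ∈ B t))) (φ t) := by
  by_contra! hundetected
  have hreplace (t) : ∃ σ, IsState σ ∧ Producible (k - 1) σ ∧
      Compatible (𝒮.image (Finset.subtype (· ∈ B t))) (φ t) σ := by
    rcases (hsize t).lt_or_eq with hlt | heq
    · exact ⟨φ t, hφ t, producible_of_card_le (by simp; lia) (hφ t).1, fun _ _ => rfl⟩
    · have hnot := hundetected t heq
      simp only [DetectsGME, not_forall, not_not] at hnot
      obtain ⟨σ, hσ, hcomp, hbisep⟩ := hnot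
      exact ⟨σ, hσ, by simpa [heq] using hbisep.producible, hcomp⟩
  choose σ hσ hprod hcomp using hreplace
  exact h _ (.blockTensor hB hσ) (.blockTensor hB hcomp) (producible_blockTensor hB hprod)

lemma lDep_blockTensor (hk : 0 < k) (hB : IsPartition B) (hsize : ∀ t, (B t).card ≤ k)
    (hφ : ∀ t, IsState (φ t)) :
    lDep k (blockTensor B φ) =
      sInf {l : ℕ∞ | ∃ t, (B t).card = k ∧ ¬ Bisep (φ t) ∧ l = lGME (φ t)} := by
  refine le_antisymm (le_sInf ?_) (le_sInf ?_)
  · rintro _ ⟨t, ht, -, rfl⟩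
    have hle := lDep_le_lGME_marginal hk ht.ge (blockTensor B φ)
    rwa [marginal_blockTensor_block hB (fun t => (hφ t).2) t] at hle
  · rintro _ ⟨𝒮, h𝒮, rfl⟩
    obtain ⟨t, ht, hdetects⟩ := h𝒮.exists_detectsGME hB hsize hφ
    exact sInf_le_of_le ⟨t, ht, hdetects.not_bisep (hφ t), rfl⟩ <|
      (lGME_le_of_detectsGME hdetects).trans <|
        Nat.cast_le.2 (sup_card_image_subtype_le 𝒮 (B t))

lemma lDep_blockTensor_le (hk : 0 < k) (hB : IsPartition B) (hsize : ∀ t, (B t).card ≤ k)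
    (hφ : ∀ t, IsState (φ t)) (hdepth : ¬ Producible (k - 1) (blockTensor B φ)) :
    lDep k (blockTensor B φ) ≤ k := by
  have hdetects : DetectsDep k {Finset.univ} (blockTensor B φ) := fun σ _ hσ => by
    rwa [compatible_singleton_univ.1 hσ]
  obtain ⟨t, ht, hdetects⟩ := hdetects.exists_detectsGME hB hsize hφ
  rw [lDep_blockTensor hk hB hsize hφ]
  refine sInf_le_of_le ⟨t, ht, hdetects.not_bisep (hφ t), rfl⟩ ?_
  simpa [ht] using lGME_le_card (hdetects.not_bisep (hφ t))

end DetectionLength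

theorem depth_detection_length_general
    {ι : Type*} [Fintype ι] [DecidableEq ι] {d : ι → ℕ} {T : Type*} [Fintype T]
    {B : T → Finset ι} (hB : IsPartition B) {k : ℕ} (hk : 2 ≤ k) (hsize : ∀ t, (B t).card ≤ k)
    {φ : ∀ t, OpOn d (B t)} (hφ : ∀ t, IsState (φ t))
    (hdepth : ¬ Producible (k - 1) (blockTensor B φ)) :
    lDep k (blockTensor B φ) =
        sInf {l : ℕ∞ | ∃ t, (B t).card = k ∧ ¬ Bisep (φ t) ∧ l = lGME (φ t)} ∧
      2 ≤ lDep k (blockTensor B φ) ∧ lDep k (blockTensor B φ) ≤ k :=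
  have hk' : 0 < k := two_pos.trans_le hk
  ⟨lDep_blockTensor hk' hB hsize hφ, two_le_lDep hk (.blockTensor hB hφ),
    lDep_blockTensor_le hk' hB hsize hφ hdepth⟩

/-- for a `k`-producible pure product state `|Ψ⟩ = |φ₁⟩ ⊗ ⋯ ⊗ |φ_m⟩` of
entanglement depth exactly `k`, with `D` the set of blocks on exactly `k` parties whose
state is genuinely entangled, `l_dep^k(|Ψ⟩) = min_{φ_i ∈ D} l_GME(|φ_i⟩)`, and in
particular `2 ≤ l_dep^k(|Ψ⟩) ≤ k`. -/
theorem depth_detection_length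
    {ι : Type*} [Fintype ι] [DecidableEq ι] {d : ι → ℕ} [∀ i, NeZero (d i)]
    (k : ℕ) (hk : 2 ≤ k) (m : ℕ) (hm : 0 < m) (B : Fin m → Finset ι)
    (hdisj : ∀ t t' : Fin m, t ≠ t' → Disjoint (B t) (B t'))
    (hcover : ∀ i : ι, ∃ t : Fin m, i ∈ B t)
    (hne : ∀ t : Fin m, B t ≠ ∅)
    (hsize : ∀ t : Fin m, (B t).card ≤ k)
    (φ : ∀ t : Fin m, Config (fun i : {i // i ∈ B t} => d i) → ℂ)
    (hφ : ∀ t : Fin m, IsState (Matrix.vecMulVec (φ t) (star (φ t))))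
    (Ψ : Config d → ℂ) (hΨ : Ψ = fun f => ∏ t, φ t (fun i => f i))
    (ρ : Matrix (Config d) (Config d) ℂ)
    (hρ : ρ = Matrix.vecMulVec Ψ (star Ψ))
    (hdepth : ¬ Producible (k - 1) ρ) :
    lDep k ρ = sInf {l : ℕ∞ | ∃ t : Fin m, (B t).card = k ∧
      ¬ Bisep (Matrix.vecMulVec (φ t) (star (φ t))) ∧
      l = lGME (Matrix.vecMulVec (φ t) (star (φ t)))} ∧
    2 ≤ lDep k ρ ∧ lDep k ρ ≤ (k : ℕ∞) := by
  have hρ' : ρ = blockTensor B fun t => Matrix.vecMulVec (φ t) (star (φ t)) := by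
    rw [hρ, hΨ, ← vecMulVec_blockVec]
    rfl
  rw [hρ'] at hdepth ⊢
  exact depth_detection_length_general ⟨hdisj, hcover⟩ hk hsize hφ hdepth

end QDL

end
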